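/- (Combined partial monotonicity of the Q function, corollary of Theorems 1 and 2.) Suppose V is AoI-antitone. Let a be a feasible action and let s = (τ, H) and s' = (τ', H') be states with τ'_n ≥ τ_n for every device n and h'_{n,m} ≥ h_{n,m} for every device n and channel m. Then Q(s', a) ≤ Q(s, a). -/

import Mathlib

/-- AoI (Age-of-Information) state vector: each device's AoI is a positive natural. -/
abbrev AoI (N : ℕ) := Fin N → ℕ+

/-- Channel state matrix: entry `(n, m)` is the (quantized) state of the channel
between device `n` and the destination on sub-channel `m`, one of `ĥ` levels. -/
abbrev Chan (N M hh : ℕ) := Fin N → Fin M → Fin hh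

/-- A state of the MDP: a pair `s = (τ, H)`. -/
abbrev MDPState (N M hh : ℕ) := AoI N × Chan N M hh

/-- An action: `a n = some m` means device `n` transmits on channel `m`;
`a n = none` means device `n` is idle (`a_n = 0`). A device uses at most
one channel automatically since `a` is a function. -/
abbrev SchedAction (N M : ℕ) := Fin N → Option (Fin M)

/-- Feasibility: every channel `m` is used by exactly one device. -/
def Feasible {N M : ℕ} (a : SchedAction N M) : Prop :=
  ∀ m : Fin M, ∃! n : Fin N, a n = some m

/-- Probability that device `n`'s AoI transition is the one encoded by the
success flags `b` (`b n = true` iff device `n`'s packet is received):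
if `a n = some m`, success has probability `1 - p n m (H n m)` and failure
probability `p n m (H n m)`; an idle device surely fails. -/
def devProb {N M hh : ℕ} (p : Fin N → Fin M → Fin hh → ℝ)
    (H : Chan N M hh) (a : SchedAction N M) (b : Fin N → Bool) (n : Fin N) : ℝ :=
  match a n with
  | some m => if b n then 1 - p n m (H n m) else p n m (H n m)
  | none => if b n then 0 else 1

/-- The next AoI vector: `1` upon reception, `τ n + 1` otherwise. -/
def nextAoI {N : ℕ} (τ : AoI N) (b : Fin N → Bool) : AoI N :=
  fun n => if b n then 1 else τ n + 1

/-- The expected next-state value `∑_{s⁺} P(s⁺ | s, a) V(s⁺)`, where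
`P((τ⁺,H⁺) | (τ,H), a) = (∏_n Pr(τ_n⁺ | τ_n, H, a_n)) · q(H⁺)`. -/
noncomputable def expNext {N M hh : ℕ} (p : Fin N → Fin M → Fin hh → ℝ)
    (q : Chan N M hh → ℝ) (V : MDPState N M hh → ℝ)
    (s : MDPState N M hh) (a : SchedAction N M) : ℝ :=
  ∑ Hp : Chan N M hh, ∑ b : Fin N → Bool,
    q Hp * (∏ n, devProb p s.2 a b n) * V (nextAoI s.1 b, Hp)

/-- `Q(s,a) = r(s) + γ ∑_{s⁺} P(s⁺ | s, a) V(s⁺)` with reward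
`r(s) = -∑_n g_n(τ_n)`. -/
noncomputable def Qval {N M hh : ℕ} (p : Fin N → Fin M → Fin hh → ℝ)
    (q : Chan N M hh → ℝ) (g : Fin N → ℕ+ → ℝ) (γ : ℝ)
    (V : MDPState N M hh → ℝ) (s : MDPState N M hh) (a : SchedAction N M) : ℝ :=
  (- ∑ n, g n (s.1 n)) + γ * expNext p q V s a

/-- `V` is AoI-antitone: increasing a single AoI coordinate (keeping everything
else fixed) cannot increase the value. -/
def AoIAntitone {N M hh : ℕ} (V : MDPState N M hh → ℝ) : Prop :=
  ∀ (n : Fin N) (H : Chan N M hh) (τ τ' : AoI N),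
    (∀ k, k ≠ n → τ' k = τ k) → τ n ≤ τ' n → V (τ', H) ≤ V (τ, H)

/-!
Writing the success flags of the devices as independent Bernoulli variables `b` with success
probabilities `x`, the expected next value is an expectation of `b ↦ V (nextAoI τ b, H⁺)`. This
function is monotone in `b`, because a reception resets an age to `1`, and antitone in `τ`. Worse
channels lower `x`. The expectation is affine in each `x i`, and its slope there is the gain from
switching the flag `i` on, which is nonnegative for a monotone function. Hence lowering `x` lowers
the expectation.
-/

theorem le_of_forall_le_update {ι β : Type*} {α : ι → Type*} [Finite ι] [DecidableEq ι]
    [∀ i, Preorder (α i)] [Preorder β] {f : (∀ i, α i) → β} {x y : ∀ i, α i} (hxy : x ≤ y)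
    (h : ∀ z ∈ Set.Icc x y, ∀ i, f z ≤ f (Function.update z i (y i))) :
    f x ≤ f y := by
  have := Fintype.ofFinite ι
  have le_piecewise (s : Finset ι) : f x ≤ f (s.piecewise y x) := by
    induction s using Finset.induction_on with
    | empty => rw [Finset.piecewise_empty]
    | insert i s _ ih =>
      have hz : s.piecewise y x ∈ Set.Icc x y := s.piecewise_mem_Icc' hxy
      rw [Finset.piecewise_insert]
      exact ih.trans (h _ hz i)
  simpa only [Finset.piecewise_univ] using le_piecewise Finset.univ

section Bernoulli

variable {ι R : Type*} [Fintype ι] [DecidableEq ι] [CommRing R]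

/-- The expectation of `f b` when the flags `b i` are independent Bernoulli variables and
`x i` is the probability of `b i = true`. The definition allows any `x`; lemmas that need actual
probabilities assume `0 ≤ x` and `x ≤ 1`. -/
def bernoulliExp (x : ι → R) (f : (ι → Bool) → R) : R :=
  ∑ b : ι → Bool, (∏ i, if b i then x i else 1 - x i) * f b

theorem bernoulliExp_eq_add_funSplitAt (i : ι) (x : ι → R) (f : (ι → Bool) → R) :
    bernoulliExp x f =
      x i * bernoulliExp (fun j : {j // j ≠ i} ↦ x j)
          (fun b ↦ f ((Equiv.funSplitAt i Bool).symm (true, b))) +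
        (1 - x i) * bernoulliExp (fun j : {j // j ≠ i} ↦ x j)
          (fun b ↦ f ((Equiv.funSplitAt i Bool).symm (false, b))) := by
  have flag_of_ne (c : Bool) (b : {j // j ≠ i} → Bool) (j : {j // j ≠ i}) :
      (Equiv.funSplitAt i Bool).symm (c, b) j = b j := by
    simp [j.2]
  unfold bernoulliExp
  rw [← (Equiv.funSplitAt i Bool).symm.sum_comp, Fintype.sum_prod_type, Fintype.sum_bool,
    Finset.mul_sum, Finset.mul_sum]
  simp only [Fintype.prod_eq_mul_prod_subtype_ne _ i, flag_of_ne, mul_assoc]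
  simp

variable [PartialOrder R] [IsOrderedRing R]

theorem bernoulliExp_mono_right {x : ι → R} (hx0 : 0 ≤ x) (hx1 : x ≤ 1) :
    Monotone (bernoulliExp x) := by
  intro f f' hf
  refine Finset.sum_le_sum fun b _ ↦ mul_le_mul_of_nonneg_left (hf b) ?_
  refine Finset.prod_nonneg fun i _ ↦ ?_
  split_ifs
  · exact hx0 i
  · exact sub_nonneg.2 (hx1 i)

theorem bernoulliExp_le_update {x : ι → R} (hx0 : 0 ≤ x) (hx1 : x ≤ 1)
    {f : (ι → Bool) → R} (hf : Monotone f) {i : ι} {t : R} (ht : x i ≤ t) :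
    bernoulliExp x f ≤ bernoulliExp (Function.update x i t) f := by
  have update_off (j : {j // j ≠ i}) : Function.update x i t j = x j :=
    Function.update_of_ne j.2 t x
  rw [bernoulliExp_eq_add_funSplitAt i x, bernoulliExp_eq_add_funSplitAt i (Function.update x i t)]
  simp only [update_off, Function.update_self]
  set expOn := bernoulliExp (fun j : {j // j ≠ i} ↦ x j)
    (fun b ↦ f ((Equiv.funSplitAt i Bool).symm (true, b)))
  set expOff := bernoulliExp (fun j : {j // j ≠ i} ↦ x j)
    (fun b ↦ f ((Equiv.funSplitAt i Bool).symm (false, b)))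
  have off_le_on : expOff ≤ expOn := by
    refine bernoulliExp_mono_right (x := fun j : {j // j ≠ i} ↦ x j)
      (fun j ↦ hx0 j) (fun j ↦ hx1 j) fun b ↦ hf fun j ↦ ?_
    by_cases hj : j = i <;> simp [hj]
  rw [← sub_nonneg]
  calc
    0 ≤ (t - x i) * (expOn - expOff) :=
      mul_nonneg (sub_nonneg.2 ht) (sub_nonneg.2 off_le_on)
    _ = t * expOn + (1 - t) * expOff - (x i * expOn + (1 - x i) * expOff) := by ring

theorem bernoulliExp_mono_left {x y : ι → R} (hx0 : 0 ≤ x) (hxy : x ≤ y) (hy1 : y ≤ 1)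
    {f : (ι → Bool) → R} (hf : Monotone f) :
    bernoulliExp x f ≤ bernoulliExp y f :=
  le_of_forall_le_update (f := (bernoulliExp · f)) hxy fun _ hz i ↦
    bernoulliExp_le_update (hx0.trans hz.1) (hz.2.trans hy1) hf (hz.2 i)

end Bernoulli

section Scheduling

variable {N M hh : ℕ}

theorem monotone_nextAoI_left (b : Fin N → Bool) : Monotone (nextAoI · b) := by
  intro τ τ' hτ n
  dsimp only [nextAoI]
  split_ifs
  · exact le_rfl
  · exact add_le_add_left (hτ n) 1

theorem antitone_nextAoI_right (τ : AoI N) : Antitone (nextAoI τ) := by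
  intro b b' hb n
  unfold nextAoI
  cases hn' : b' n
  · have hn : b n = false := le_bot_iff.1 ((hb n).trans_eq hn')
    rw [hn]
  · exact one_le

theorem AoIAntitone.antitone {V : MDPState N M hh → ℝ} (hV : AoIAntitone V)
    (H : Chan N M hh) : Antitone fun τ ↦ V (τ, H) := by
  intro τ τ' hτ
  refine le_of_forall_le_update (f := fun τ ↦ OrderDual.toDual (V (τ, H))) hτ
    fun σ hσ n ↦ hV n H σ _ (fun k hk ↦ Function.update_of_ne hk _ σ) ?_
  rw [Function.update_self]
  exact hσ.2 n

/-- The probability that the packet of device `n` is received, which is `0` for an idle device. -/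
def successProb (p : Fin N → Fin M → Fin hh → ℝ) (H : Chan N M hh) (a : SchedAction N M)
    (n : Fin N) : ℝ :=
  (a n).elim 0 fun m ↦ 1 - p n m (H n m)

variable {p : Fin N → Fin M → Fin hh → ℝ}

theorem successProb_nonneg (hp1 : ∀ n m h, p n m h ≤ 1) (H : Chan N M hh)
    (a : SchedAction N M) : 0 ≤ successProb p H a := by
  intro n
  unfold successProb
  cases a n with
  | none => exact le_rfl
  | some m => exact sub_nonneg.2 (hp1 n m _)

theorem successProb_le_one (hp0 : ∀ n m h, 0 ≤ p n m h) (H : Chan N M hh)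
    (a : SchedAction N M) : successProb p H a ≤ 1 := by
  intro n
  unfold successProb
  cases a n with
  | none => exact zero_le_one
  | some m => exact sub_le_self 1 (hp0 n m _)

theorem antitone_successProb (hpmono : ∀ n m, Monotone (p n m)) (a : SchedAction N M) :
    Antitone (successProb p · a) := by
  intro H H' hH n
  dsimp only [successProb]
  cases a n with
  | none => exact le_rfl
  | some m => exact sub_le_sub_left (hpmono n m (hH n m)) 1

theorem devProb_eq_ite_successProb (p : Fin N → Fin M → Fin hh → ℝ) (H : Chan N M hh)
    (a : SchedAction N M) (b : Fin N → Bool) (n : Fin N) :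
    devProb p H a b n = if b n then successProb p H a n else 1 - successProb p H a n := by
  unfold devProb successProb
  cases a n <;> simp

theorem expNext_eq_sum_bernoulliExp (p : Fin N → Fin M → Fin hh → ℝ) (q : Chan N M hh → ℝ)
    (V : MDPState N M hh → ℝ) (s : MDPState N M hh) (a : SchedAction N M) :
    expNext p q V s a =
      ∑ Hp, q Hp * bernoulliExp (successProb p s.2 a) fun b ↦ V (nextAoI s.1 b, Hp) := by
  simp only [expNext, bernoulliExp, devProb_eq_ite_successProb, Finset.mul_sum, mul_assoc]

variable {q : Chan N M hh → ℝ} {V : MDPState N M hh → ℝ}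

theorem antitone_expNext_aoi (hp0 : ∀ n m h, 0 ≤ p n m h) (hp1 : ∀ n m h, p n m h ≤ 1)
    (hq0 : ∀ H, 0 ≤ q H) (hV : AoIAntitone V) (H : Chan N M hh) (a : SchedAction N M) :
    Antitone fun τ ↦ expNext p q V (τ, H) a := by
  intro τ τ' hτ
  simp only [expNext_eq_sum_bernoulliExp]
  exact Finset.sum_le_sum fun Hp _ ↦ mul_le_mul_of_nonneg_left
    (bernoulliExp_mono_right (successProb_nonneg hp1 H a) (successProb_le_one hp0 H a)
      fun b ↦ hV.antitone Hp (monotone_nextAoI_left b hτ))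
    (hq0 Hp)

theorem antitone_expNext_chan (hp0 : ∀ n m h, 0 ≤ p n m h) (hp1 : ∀ n m h, p n m h ≤ 1)
    (hpmono : ∀ n m, Monotone (p n m)) (hq0 : ∀ H, 0 ≤ q H) (hV : AoIAntitone V)
    (τ : AoI N) (a : SchedAction N M) :
    Antitone fun H ↦ expNext p q V (τ, H) a := by
  intro H H' hH
  simp only [expNext_eq_sum_bernoulliExp]
  exact Finset.sum_le_sum fun Hp _ ↦ mul_le_mul_of_nonneg_left
    (bernoulliExp_mono_left (successProb_nonneg hp1 H' a) (antitone_successProb hpmono a hH)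
      (successProb_le_one hp0 H a) ((hV.antitone Hp).comp (antitone_nextAoI_right τ)))
    (hq0 Hp)

theorem q_partially_monotone_general {g : Fin N → ℕ+ → ℝ} {γ : ℝ}
    (hp0 : ∀ n m h, 0 ≤ p n m h) (hp1 : ∀ n m h, p n m h ≤ 1)
    (hpmono : ∀ n m, Monotone (p n m)) (hq0 : ∀ H, 0 ≤ q H) (hgmono : ∀ n, Monotone (g n))
    (hγ0 : 0 ≤ γ) (hV : AoIAntitone V) (a : SchedAction N M) :
    Antitone fun s ↦ Qval p q g γ V s a := by
  rintro ⟨τ, H⟩ ⟨τ', H'⟩ ⟨hτ, hH⟩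
  have cost_le : ∑ n, g n (τ n) ≤ ∑ n, g n (τ' n) :=
    Finset.sum_le_sum fun n _ ↦ hgmono n (hτ n)
  have expNext_le : expNext p q V (τ', H') a ≤ expNext p q V (τ, H) a :=
    calc
      expNext p q V (τ', H') a ≤ expNext p q V (τ, H') a :=
        antitone_expNext_aoi hp0 hp1 hq0 hV H' a hτ
      _ ≤ expNext p q V (τ, H) a := antitone_expNext_chan hp0 hp1 hpmono hq0 hV τ a hH
  exact add_le_add (neg_le_neg cost_le) (mul_le_mul_of_nonneg_left expNext_le hγ0)

end Scheduling

/-- **Combined partial monotonicity of the Q function** (corollary of Theorems 1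
and 2). If `V` is AoI-antitone, `a` is feasible, `τ' n ≥ τ n` for every device `n`
and `H' n m ≥ H n m` for every device `n` and channel `m`, then
`Q((τ', H'), a) ≤ Q((τ, H), a)`. -/
theorem q_partially_monotone
    (N M hh : ℕ) (hMN : M < N)
    (p : Fin N → Fin M → Fin hh → ℝ)
    (hp0 : ∀ n m h, 0 ≤ p n m h) (hp1 : ∀ n m h, p n m h ≤ 1)
    (hpmono : ∀ n m, Monotone (p n m))
    (q : Chan N M hh → ℝ) (hq0 : ∀ H, 0 ≤ q H) (hq1 : ∑ H : Chan N M hh, q H = 1)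
    (g : Fin N → ℕ+ → ℝ) (hgpos : ∀ n τ, 0 < g n τ) (hgmono : ∀ n, Monotone (g n))
    (γ : ℝ) (hγ0 : 0 < γ) (hγ1 : γ < 1)
    (V : MDPState N M hh → ℝ) (hV : AoIAntitone V)
    (a : SchedAction N M) (ha : Feasible a)
    (τ τ' : AoI N) (H H' : Chan N M hh)
    (hτ : ∀ n, τ n ≤ τ' n) (hH : ∀ n m, H n m ≤ H' n m) :
    Qval p q g γ V (τ', H') a ≤ Qval p q g γ V (τ, H) a :=
  q_partially_monotone_general hp0 hp1 hpmono hq0 hgmono hγ0.le hV a ⟨hτ, hH⟩
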